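/- Let 𝔤 be a finite-dimensional reductive complex Lie algebra, let g be an automorphism of 𝔤 of finite order, and let 𝓗 be a Cartan subalgebra of 𝔤. Then the fixed-point set 𝓗^g := 𝓗 ∩ 𝔤^g is contained in some Cartan subalgebra of the fixed-point subalgebra 𝔤^g. -/

import Mathlib

/-- A finite-dimensional Lie algebra is *reductive* if its (solvable) radical equals its
centre. -/
def LieAlgebra.IsReductive (R L : Type*) [CommRing R] [LieRing L] [LieAlgebra R L] : Prop :=
  LieAlgebra.radical R L = LieAlgebra.center R L

variable {L : Type*} [LieRing L] [LieAlgebra ℂ L]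

/-- The fixed-point subalgebra `L^g` of a Lie algebra automorphism `g`. -/
def LieEquiv.fixedSubalgebra (g : L ≃ₗ⁅ℂ⁆ L) : LieSubalgebra ℂ L where
  carrier := {x | g x = x}
  add_mem' := by
    intro a b ha hb
    simp only [Set.mem_setOf_eq] at ha hb ⊢
    show g.toLinearEquiv (a + b) = a + b
    rw [map_add]
    show g a + g b = a + b
    rw [ha, hb]
  zero_mem' := by
    show g.toLinearEquiv 0 = 0
    exact map_zero _
  smul_mem' := by
    intro c x hx
    simp only [Set.mem_setOf_eq] at hx ⊢
    show g.toLinearEquiv (c • x) = c • x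
    rw [map_smul]
    show c • g x = c • x
    rw [hx]
  lie_mem' := by
    intro x y hx hy
    simp only [Set.mem_setOf_eq] at hx hy ⊢
    rw [g.map_lie, hx, hy]

/-!
A Cartan subalgebra of a reductive Lie algebra is abelian and acts semisimply. Both facts hold in
the Killing quotient of `𝔤` by its centre, and they lift to `𝔤` because every scalar 2-cocycle on
a Killing Lie algebra is a coboundary, so elements of `𝔤` that commute modulo the centre commute.
Hence, for any subalgebra `A`, the set `s = H ∩ A` consists of commuting elements acting semisimply
on `A`. Any Cartan subalgebra `E` of the centralizer of `s` in `A` contains `s`, and an element of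
`A` normalizing `E` is killed by the square of each `ad t` with `t ∈ s`, so it already centralizes
`s`: thus `E` is a Cartan subalgebra of `A`.
-/

open LieAlgebra LieModule

section LinearMap

variable {R M N : Type*} [CommRing R] [AddCommGroup M] [Module R M] [AddCommGroup N] [Module R N]

lemma apply_eq_zero_of_apply_apply_eq_zero_of_isFinitelySemisimple {f : Module.End R M}
    (hf : f.IsFinitelySemisimple) {x : M} (hx : f (f x) = 0) : f x = 0 := by
  have hmem : x ∈ f.maxGenEigenspace 0 :=
    (Module.End.mem_maxGenEigenspace f 0 x).mpr ⟨2, by simpa [pow_two] using hx⟩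
  simpa [hf.maxGenEigenspace_eq_eigenspace] using hmem

lemma iSup_maxGenEigenspace_eq_top_of_surjective {φ : Module.End R M} {ψ : Module.End R N}
    (g : M →ₗ[R] N) (hg : Function.Surjective g) (hcomm : ∀ x, g (φ x) = ψ (g x))
    (hφ : ⨆ μ, φ.maxGenEigenspace μ = ⊤) : ⨆ μ, ψ.maxGenEigenspace μ = ⊤ := by
  have hpow (μ : R) (k : ℕ) (x : M) : g (((φ - μ • 1) ^ k) x) = ((ψ - μ • 1) ^ k) (g x) := by
    induction k generalizing x with
    | zero => simp
    | succ k ih => simp [pow_succ, ih, hcomm]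
  have hle (μ : R) : (φ.maxGenEigenspace μ).map g ≤ ψ.maxGenEigenspace μ := by
    rintro _ ⟨x, hx, rfl⟩
    obtain ⟨k, hk⟩ := (Module.End.mem_maxGenEigenspace φ μ x).mp hx
    exact (Module.End.mem_maxGenEigenspace ψ μ (g x)).mpr ⟨k, by rw [← hpow, hk, map_zero]⟩
  rw [eq_top_iff]
  calc ⊤ = ⨆ μ, (φ.maxGenEigenspace μ).map g := by
        rw [← Submodule.map_iSup, hφ, Submodule.map_top, LinearMap.range_eq_top.mpr hg]
    _ ≤ ⨆ μ, ψ.maxGenEigenspace μ := iSup_mono hle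

end LinearMap

section CommRing

variable {R 𝔤 𝔮 : Type*} [CommRing R] [LieRing 𝔤] [LieAlgebra R 𝔤] [LieRing 𝔮] [LieAlgebra R 𝔮]

lemma isSolvable_comap (f : 𝔤 →ₗ⁅R⁆ 𝔮) (I : LieIdeal R 𝔮) [IsSolvable f.ker] [IsSolvable I] :
    IsSolvable (I.comap f) := by
  have hcomap (k : ℕ) :
      derivedSeriesOfIdeal R 𝔤 k (I.comap f) ≤ (derivedSeriesOfIdeal R 𝔮 k I).comap f := by
    induction k with
    | zero => rfl
    | succ k ih =>
      simp only [derivedSeriesOfIdeal_succ]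
      exact (LieSubmodule.mono_lie ih ih).trans (LieIdeal.comap_bracket_le f)
  obtain ⟨k, hk⟩ := IsSolvable.solvable R I
  obtain ⟨l, hl⟩ := IsSolvable.solvable R f.ker
  rw [LieIdeal.derivedSeries_eq_bot_iff] at hk hl
  have hker : derivedSeriesOfIdeal R 𝔤 k (I.comap f) ≤ f.ker := by
    simpa only [hk, LieHom.ker] using hcomap k
  refine IsSolvable.mk (R := R) (k := l + k) ?_
  rw [LieIdeal.derivedSeries_eq_bot_iff, derivedSeriesOfIdeal_add, eq_bot_iff, ← hl]
  exact derivedSeriesOfIdeal_mono hker l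

lemma hasTrivialRadical_of_surjective_of_ker_eq_radical [IsNoetherian R 𝔤] {f : 𝔤 →ₗ⁅R⁆ 𝔮}
    (hf : Function.Surjective f) (hker : f.ker = radical R 𝔤) : HasTrivialRadical R 𝔮 := by
  refine hasTrivialRadical_of_no_solvable_ideals fun I _ ↦ (eq_bot_iff).mpr fun y hy ↦ ?_
  obtain ⟨x, rfl⟩ := hf y
  have : IsSolvable f.ker := hker ▸ inferInstance
  have hx : x ∈ radical R 𝔤 :=
    (LieIdeal.solvable_iff_le_radical R 𝔤 _).mp (isSolvable_comap f I) (LieIdeal.mem_comap.mpr hy)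
  rwa [← hker, LieHom.mem_ker] at hx

lemma isNilpotent_map (H : LieSubalgebra R 𝔤) [LieRing.IsNilpotent H] (f : 𝔤 →ₗ⁅R⁆ 𝔮) :
    LieRing.IsNilpotent (H.map f) := by
  have hrange : H.map f = (f.comp H.incl).range := by
    ext y
    simp [LieSubalgebra.mem_map]
  rw [hrange]
  exact (f.comp H.incl).isNilpotent_range

lemma isTriangularizable_map (H : LieSubalgebra R 𝔤) [IsTriangularizable R H 𝔤]
    {f : 𝔤 →ₗ⁅R⁆ 𝔮} (hf : Function.Surjective f) : IsTriangularizable R (H.map f) 𝔮 where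
  maxGenEigenspace_eq_top := by
    rintro ⟨_, h, hh, rfl⟩
    exact iSup_maxGenEigenspace_eq_top_of_surjective f.toLinearMap hf (fun x ↦ f.map_lie h x)
      (IsTriangularizable.maxGenEigenspace_eq_top (⟨h, hh⟩ : H))

lemma mem_of_forall_lie_eq_zero_of_isCartanSubalgebra {H : LieSubalgebra R 𝔤}
    [H.IsCartanSubalgebra] {x : 𝔤} (hx : ∀ y ∈ H, ⁅y, x⁆ = 0) : x ∈ H := by
  rw [← LieSubalgebra.IsCartanSubalgebra.self_normalizing (H := H),
    LieSubalgebra.mem_normalizer_iff']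
  exact fun y hy ↦ hx y hy ▸ H.zero_mem

lemma isCartanSubalgebra_map (H : LieSubalgebra R 𝔤) [H.IsCartanSubalgebra] (f : 𝔤 →ₗ⁅R⁆ 𝔮)
    (hker : ∀ x ∈ f.ker, x ∈ H) (hnorm : ∀ y ∈ (H.map f).normalizer, y ∈ f.range) :
    (H.map f).IsCartanSubalgebra where
  nilpotent := isNilpotent_map H f
  self_normalizing := by
    refine le_antisymm (fun y hy ↦ ?_) (LieSubalgebra.le_normalizer _)
    obtain ⟨x, rfl⟩ := hnorm y hy
    refine ⟨x, ?_, rfl⟩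
    change x ∈ H
    rw [← LieSubalgebra.IsCartanSubalgebra.self_normalizing (H := H),
      LieSubalgebra.mem_normalizer_iff']
    intro h hh
    obtain ⟨h', hh', heq⟩ :=
      (LieSubalgebra.mem_normalizer_iff' _ _).mp hy (f h) ⟨h, hh, rfl⟩
    have hsub : ⁅h, x⁆ - h' ∈ H := hker _ <| by
      rw [LieHom.mem_ker, map_sub, LieHom.map_lie, sub_eq_zero]
      exact heq.symm
    simpa using H.add_mem hsub hh'

lemma isCartanSubalgebra_map_of_surjective (H : LieSubalgebra R 𝔤) [H.IsCartanSubalgebra]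
    {f : 𝔤 →ₗ⁅R⁆ 𝔮} (hf : Function.Surjective f) (hker : f.ker ≤ center R 𝔤) :
    (H.map f).IsCartanSubalgebra :=
  isCartanSubalgebra_map H f
    (fun x hx ↦ mem_of_forall_lie_eq_zero_of_isCartanSubalgebra fun y _ ↦
      (mem_maxTrivSubmodule R 𝔤 𝔤 x).mp (hker hx) y)
    (fun y _ ↦ hf y)

lemma lie_eq_lie_of_map_eq {f : 𝔤 →ₗ⁅R⁆ 𝔮} (hker : f.ker ≤ center R 𝔤) {x x' y y' : 𝔤}
    (hx : f x = f x') (hy : f y = f y') :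
    ⁅x, y⁆ = ⁅x', y'⁆ := by
  have hcentral {z z' : 𝔤} (hz : f z = f z') (w : 𝔤) : ⁅w, z⁆ = ⁅w, z'⁆ := by
    have hmem : z - z' ∈ center R 𝔤 := hker (by rw [LieHom.mem_ker, map_sub, hz, sub_self])
    rw [← sub_eq_zero, ← lie_sub]
    exact (mem_maxTrivSubmodule ..).mp hmem w
  rw [hcentral hy, ← lie_skew, hcentral hx, lie_skew]

variable (R 𝔤) in
lemma ker_rangeRestrict_ad_eq_center : (LieDerivation.ad R 𝔤).rangeRestrict.ker = center R 𝔤 := by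
  rw [← LieDerivation.ad_ker_eq_center]
  ext x
  simp only [LieHom.mem_ker, LieHom.rangeRestrict_apply, ← Subtype.val_inj, ZeroMemClass.coe_zero]

variable (R) in
/-- The centralizer of a subset `s` of a Lie algebra, as a Lie subalgebra. When the elements of `s`
commute with each other, every Cartan subalgebra of it contains `s`. -/
def lieCentralizer (s : Set 𝔤) : LieSubalgebra R 𝔤 where
  carrier := {x | ∀ t ∈ s, ⁅t, x⁆ = 0}
  add_mem' hx hy t ht := by rw [lie_add, hx t ht, hy t ht, add_zero]
  zero_mem' t _ := lie_zero t
  smul_mem' c x hx t ht := by rw [lie_smul, hx t ht, smul_zero]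
  lie_mem' hx hy t ht := by rw [leibniz_lie, hx t ht, hy t ht, zero_lie, lie_zero, add_zero]

lemma mem_lieCentralizer {s : Set 𝔤} {x : 𝔤} : x ∈ lieCentralizer R s ↔ ∀ t ∈ s, ⁅t, x⁆ = 0 :=
  Iff.rfl

end CommRing

section Field

variable {K 𝔤 𝔮 : Type*} [Field K] [LieRing 𝔤] [LieAlgebra K 𝔤] [LieRing 𝔮] [LieAlgebra K 𝔮]

theorem exists_isCartanSubalgebra_superset_of_forall_lie_eq_zero [Infinite K]
    [FiniteDimensional K 𝔤] {s : Set 𝔤} (hcomm : ∀ t ∈ s, ∀ u ∈ s, ⁅t, u⁆ = 0)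
    (hss : ∀ t ∈ s, ∀ x : 𝔤, ⁅t, ⁅t, x⁆⁆ = 0 → ⁅t, x⁆ = 0) :
    ∃ H : LieSubalgebra K 𝔤, H.IsCartanSubalgebra ∧ s ⊆ H := by
  let C := lieCentralizer K s
  obtain ⟨a, hE⟩ := exists_isCartanSubalgebra_engel K C
  set E := LieSubalgebra.engel K a
  have hs : s ⊆ E.map C.incl := fun t ht ↦ by
    have htC : t ∈ C := fun u hu ↦ hcomm u hu t ht
    refine ⟨⟨t, htC⟩, mem_of_forall_lie_eq_zero_of_isCartanSubalgebra fun y _ ↦ ?_, rfl⟩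
    rw [← lie_skew, neg_eq_zero]
    exact Subtype.ext (mem_lieCentralizer.mp y.2 t ht)
  have hnorm : ∀ x ∈ (E.map C.incl).normalizer, x ∈ C := fun x hx t ht ↦ by
    obtain ⟨y, -, hy⟩ := (LieSubalgebra.mem_normalizer_iff' _ _).mp hx t (hs ht)
    exact hss t ht x (hy ▸ mem_lieCentralizer.mp y.2 t ht)
  refine ⟨E.map C.incl, isCartanSubalgebra_map E C.incl ?_ ?_, hs⟩
  · simp
  · simpa using hnorm

section Killing

variable [FiniteDimensional K 𝔮] [IsKilling K 𝔮]

/- For alternating `ω`, the hypothesis is the 2-cocycle condition with trivial coefficients, and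
the conclusion says that `ω` is a coboundary. The Killing form turns `ω` into a derivation. -/
lemma exists_eq_killingForm_lie_of_cocycle (ω : 𝔮 →ₗ[K] 𝔮 →ₗ[K] K)
    (hω : ∀ a b c, ω ⁅a, b⁆ c = ω a ⁅b, c⁆ - ω b ⁅a, c⁆) :
    ∃ d, ∀ a b, ω a b = killingForm K 𝔮 d ⁅a, b⁆ := by
  have hnd := IsKilling.killingForm_nondegenerate K 𝔮
  let κ := LinearMap.BilinForm.toDual (killingForm K 𝔮) hnd
  let D : 𝔮 →ₗ[K] 𝔮 := κ.symm.toLinearMap ∘ₗ ω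
  have hD (a b : 𝔮) : killingForm K 𝔮 (D a) b = ω a b :=
    LinearMap.BilinForm.apply_toDual_symm_apply (hB := hnd) (ω a) b
  have hder (a b : 𝔮) : D ⁅a, b⁆ = ⁅a, D b⁆ - ⁅b, D a⁆ := by
    refine κ.injective (LinearMap.ext fun c ↦ ?_)
    change killingForm K 𝔮 (D ⁅a, b⁆) c = killingForm K 𝔮 (⁅a, D b⁆ - ⁅b, D a⁆) c
    rw [map_sub, LinearMap.sub_apply, traceForm_apply_lie_apply', traceForm_apply_lie_apply',
      hD, hD, hD, hω]
    ring
  obtain ⟨d, hd⟩ := LieDerivation.IsKilling.exists_eq_ad (⟨D, hder⟩ : LieDerivation K 𝔮 𝔮)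
  refine ⟨d, fun a b ↦ ?_⟩
  have hDa : D a = ⁅d, a⁆ := by
    rw [← LieDerivation.ad_apply_apply (R := K), hd]
    rfl
  rw [← hD, hDa, traceForm_apply_lie_apply]

variable {f : 𝔤 →ₗ⁅K⁆ 𝔮} (hf : Function.Surjective f) (hker : f.ker ≤ center K 𝔤)

include hf hker

lemma exists_apply_lie_eq_killingForm (φ : Module.Dual K 𝔤) :
    ∃ d, ∀ x y, φ ⁅x, y⁆ = killingForm K 𝔮 d ⁅f x, f y⁆ := by
  obtain ⟨s, hs⟩ := f.toLinearMap.exists_rightInverse_of_surjective (LinearMap.range_eq_top.mpr hf)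
  replace hs (a : 𝔮) : f (s a) = a := LinearMap.congr_fun hs a
  let ω : 𝔮 →ₗ[K] 𝔮 →ₗ[K] K :=
    ((toEnd K 𝔤 𝔤 : 𝔤 →ₗ[K] Module.End K 𝔤).compl₁₂ s s).compr₂ φ
  have hω (x y : 𝔤) : ω (f x) (f y) = φ ⁅x, y⁆ :=
    congrArg φ (lie_eq_lie_of_map_eq hker (hs _) (hs _))
  obtain ⟨d, hd⟩ := exists_eq_killingForm_lie_of_cocycle ω <| hf.forall₃.mpr fun x y z ↦ by
    simp only [← LieHom.map_lie, hω, lie_lie, map_sub]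
  exact ⟨d, fun x y ↦ by rw [← hω, hd]⟩

lemma lie_eq_zero_of_lie_map_eq_zero {x y : 𝔤} (hxy : ⁅f x, f y⁆ = 0) : ⁅x, y⁆ = 0 := by
  rw [← Module.forall_dual_apply_eq_zero_iff K]
  intro φ
  obtain ⟨d, hd⟩ := exists_apply_lie_eq_killingForm hf hker φ
  rw [hd, hxy, map_zero]

variable (H : LieSubalgebra K 𝔤) [H.IsCartanSubalgebra]

lemma lie_eq_zero_of_mem_isCartanSubalgebra {t u : 𝔤} (ht : t ∈ H) (hu : u ∈ H) : ⁅t, u⁆ = 0 := by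
  have := isCartanSubalgebra_map_of_surjective H hf hker
  refine lie_eq_zero_of_lie_map_eq_zero hf hker ?_
  exact congrArg Subtype.val
    (trivial_lie_zero (H.map f) (H.map f) ⟨f t, t, ht, rfl⟩ ⟨f u, u, hu, rfl⟩)

lemma lie_eq_zero_of_lie_lie_eq_zero_of_mem_isCartanSubalgebra [PerfectField K]
    [IsTriangularizable K H 𝔤] {t x : 𝔤} (ht : t ∈ H) (hx : ⁅t, ⁅t, x⁆⁆ = 0) : ⁅t, x⁆ = 0 := by
  have := isCartanSubalgebra_map_of_surjective H hf hker
  have := isTriangularizable_map H hf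
  have hss : (ad K 𝔮 (f t)).IsSemisimple :=
    IsKilling.isSemisimple_ad_of_mem_isCartanSubalgebra (H := H.map f) ⟨t, ht, rfl⟩
  refine lie_eq_zero_of_lie_map_eq_zero hf hker ?_
  exact apply_eq_zero_of_apply_apply_eq_zero_of_isFinitelySemisimple hss.isFinitelySemisimple
    (by simp only [ad_apply, ← LieHom.map_lie, hx, map_zero])

end Killing

end Field

section Reductive

variable {K 𝔤 : Type*} [Field K] [CharZero K] [LieRing 𝔤] [LieAlgebra K 𝔤]
  [FiniteDimensional K 𝔤]

lemma isKilling_range_ad_of_isReductive (hred : LieAlgebra.IsReductive K 𝔤) :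
    IsKilling K (LieDerivation.ad K 𝔤).range := by
  have : HasTrivialRadical K (LieDerivation.ad K 𝔤).range :=
    hasTrivialRadical_of_surjective_of_ker_eq_radical
      (LieDerivation.ad K 𝔤).surjective_rangeRestrict
      ((ker_rangeRestrict_ad_eq_center K 𝔤).trans hred.symm)
  infer_instance

theorem fixed_of_cartan_le_cartan_of_fixedSubalgebra_general
    (hred : LieAlgebra.IsReductive K 𝔤) (H : LieSubalgebra K 𝔤) [H.IsCartanSubalgebra]
    [IsTriangularizable K H 𝔤] (A : LieSubalgebra K 𝔤) :
    ∃ H₀ : LieSubalgebra K A, H₀.IsCartanSubalgebra ∧ H.comap A.incl ≤ H₀ := by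
  have := isKilling_range_ad_of_isReductive hred
  have hsurj := (LieDerivation.ad K 𝔤).surjective_rangeRestrict
  have hker := (ker_rangeRestrict_ad_eq_center K 𝔤).le
  refine exists_isCartanSubalgebra_superset_of_forall_lie_eq_zero
    (s := (H.comap A.incl : Set A)) (fun t ht u hu ↦ Subtype.ext ?_)
    (fun t ht x hx ↦ Subtype.ext ?_)
  · exact lie_eq_zero_of_mem_isCartanSubalgebra hsurj hker H ht hu
  · exact lie_eq_zero_of_lie_lie_eq_zero_of_mem_isCartanSubalgebra hsurj hker H ht
      (congrArg Subtype.val hx)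

end Reductive

/-- Let `L` be a finite-dimensional reductive complex Lie algebra, `g` an
automorphism of `L` of finite order `n`, and `H` a Cartan subalgebra of `L`.  Then the
fixed-point set `H^g = H ∩ L^g` is contained in some Cartan subalgebra of the fixed-point
subalgebra `L^g`. -/
theorem fixed_of_cartan_le_cartan_of_fixedSubalgebra
    [FiniteDimensional ℂ L] (hred : LieAlgebra.IsReductive ℂ L)
    (g : L ≃ₗ⁅ℂ⁆ L) (n : ℕ) (hn : 0 < n) (hg : ∀ x, (⇑g)^[n] x = x)
    (H : LieSubalgebra ℂ L) (hH : H.IsCartanSubalgebra) :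
    ∃ H₀ : LieSubalgebra ℂ g.fixedSubalgebra, H₀.IsCartanSubalgebra ∧
      LieSubalgebra.comap g.fixedSubalgebra.incl H ≤ H₀ :=
  fixed_of_cartan_le_cartan_of_fixedSubalgebra_general hred H g.fixedSubalgebra
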